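/- Let 𝔻 ⊂ ℝ^m be the closed unit ball, let μ be a finite Borel measure on 𝔻, and let α ∈ ℕ^m be a multi-index. Set e = (1,…,1) ∈ ℕ^m. Then there exists an essentially bounded measurable function ρ : ℝ^m → ℝ with ‖ρ‖_{L^∞} ≤ μ(𝔻) such that for every smooth compactly supported function φ : ℝ^m → ℝ, ∫_𝔻 ∂^α φ dμ = ∫_{ℝ^m} ∂^{α+e} φ(u) ρ(u) du (the right-hand integral with respect to Lebesgue measure). -/

import Mathlib

open MeasureTheory Filter Topology

/-- Iterated directional (line) derivative of a function along a list of directions. -/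
noncomputable def iterLineDeriv {E : Type} [NormedAddCommGroup E] [NormedSpace ℝ E] :
    List E → (E → ℝ) → (E → ℝ)
  | [], f => f
  | v :: vs, f => iterLineDeriv vs (fun x => lineDeriv ℝ f x v)

/-- The list of coordinate directions encoding the multi-index `α`: the `i`-th basis vector of
`ℝ^m` repeated `α i` times; `iterLineDeriv (multiIndexList α) f = ∂^α f`. -/
noncomputable def multiIndexList {m : ℕ} (α : Fin m → ℕ) :
    List (EuclideanSpace ℝ (Fin m)) :=
  (List.finRange m).flatMap fun i => List.replicate (α i) (EuclideanSpace.single i (1 : ℝ))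

/-!
Take `ρ u = μ {x | u ≤ x}`, which does not depend on `α`. Writing `ψ = ∂^α φ` and `G = ∂^e ψ`,
the fundamental theorem of calculus in each coordinate gives `ψ x = ∫_{u ≤ x} G u du`. Integrating
this against `μ` and exchanging the integrals turns `∫ ψ dμ` into `∫ G u * μ {x | u ≤ x} du`.

The coordinatewise formula is proved by integrating `∂_{v₁} ⋯ ∂_{vₙ} g` over the orthant
`{x + ∑ tᵢ vᵢ | t ≤ 0}` for any linearly independent directions `vᵢ` in a fixed space. In this
generality Fubini peels off one direction at a time without restricting `g` to slices.
-/

section LineDeriv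

variable {E F : Type*} [NormedAddCommGroup E] [NormedSpace ℝ E]
  [NormedAddCommGroup F] [NormedSpace ℝ F]

lemma lineDeriv_eq_fderiv_of_differentiable {f : E → F} (hf : Differentiable ℝ f) (v : E) :
    (fun x => lineDeriv ℝ f x v) = fun x => fderiv ℝ f x v :=
  funext fun x => (hf x).lineDeriv_eq_fderiv

lemma contDiff_lineDeriv {n : WithTop ℕ∞} {f : E → F} (hf : ContDiff ℝ (n + 1) f) (v : E) :
    ContDiff ℝ n fun x => lineDeriv ℝ f x v := by
  rw [lineDeriv_eq_fderiv_of_differentiable (hf.differentiable (by simp))]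
  exact (hf.fderiv_right le_rfl).clm_apply contDiff_const

lemma hasCompactSupport_lineDeriv {f : E → F} (hf : HasCompactSupport f) (v : E) :
    HasCompactSupport fun x => lineDeriv ℝ f x v := by
  refine hf.mono' fun x => not_imp_not.1 fun hx => Function.notMem_support.2 ?_
  have hzero : f =ᶠ[𝓝 x] fun _ => 0 := notMem_tsupport_iff_eventuallyEq.1 hx
  rw [hzero.lineDeriv_eq]
  simp [lineDeriv]

lemma lineDeriv_lineDeriv_eq_fderiv_fderiv {f : E → F} (hf : ContDiff ℝ 2 f) (x v w : E) :
    lineDeriv ℝ (fun y => lineDeriv ℝ f y v) x w = fderiv ℝ (fderiv ℝ f) x w v := by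
  have hdiff : DifferentiableAt ℝ (fderiv ℝ f) x :=
    (hf.fderiv_right (m := 1) (by norm_num)).differentiable (by simp) x
  rw [lineDeriv_eq_fderiv_of_differentiable (hf.differentiable (by simp)),
    (hdiff.clm_apply (differentiableAt_const v)).lineDeriv_eq_fderiv,
    fderiv_clm_apply hdiff (differentiableAt_const v)]
  simp

lemma lineDeriv_lineDeriv_comm {f : E → F} (hf : ContDiff ℝ 2 f) (x v w : E) :
    lineDeriv ℝ (fun y => lineDeriv ℝ f y v) x w =
      lineDeriv ℝ (fun y => lineDeriv ℝ f y w) x v := by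
  rw [lineDeriv_lineDeriv_eq_fderiv_fderiv hf, lineDeriv_lineDeriv_eq_fderiv_fderiv hf]
  exact (hf.contDiffAt.isSymmSndFDerivAt (by simp)).eq w v

lemma deriv_comp_add_smul (f : E → F) (x v : E) (t : ℝ) :
    deriv (fun s => f (x + s • v)) t = lineDeriv ℝ f (x + t • v) v := by
  have hshift : (fun s : ℝ => f (x + t • v + s • v)) = fun s => f (x + (t + s) • v) := by
    simp only [add_smul, add_assoc]
  rw [lineDeriv, hshift, deriv_comp_const_add (f := fun s => f (x + s • v)), add_zero]

lemma setIntegral_Iic_lineDeriv [CompleteSpace F] {f : E → F} (hf : ContDiff ℝ 1 f)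
    (hfc : HasCompactSupport f) {v : E} (hv : v ≠ 0) (x : E) :
    ∫ t in Set.Iic (0 : ℝ), lineDeriv ℝ f (x + t • v) v = f x := by
  have hline : IsClosedEmbedding fun t : ℝ => x + t • v :=
    (Homeomorph.addLeft x).isClosedEmbedding.comp (isClosedEmbedding_smul_left hv)
  have hf_line : ContDiff ℝ 1 fun t : ℝ => f (x + t • v) := by fun_prop
  simp only [← deriv_comp_add_smul]
  rw [HasCompactSupport.integral_Iic_deriv_eq hf_line (hfc.comp_isClosedEmbedding hline),
    zero_smul, add_zero]

end LineDeriv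

section IterLineDeriv

variable {E : Type} [NormedAddCommGroup E] [NormedSpace ℝ E] {f : E → ℝ}

lemma contDiff_iterLineDeriv {n : WithTop ℕ∞} (l : List E) (hf : ContDiff ℝ (n + l.length) f) :
    ContDiff ℝ n (iterLineDeriv l f) := by
  induction l generalizing f with
  | nil => simpa [iterLineDeriv] using hf
  | cons v l ih =>
    rw [List.length_cons, Nat.cast_succ, ← add_assoc] at hf
    exact ih (contDiff_lineDeriv hf v)

lemma continuous_iterLineDeriv (l : List E) (hf : ContDiff ℝ l.length f) :
    Continuous (iterLineDeriv l f) :=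
  (contDiff_iterLineDeriv (n := 0) l (by rwa [zero_add])).continuous

lemma hasCompactSupport_iterLineDeriv (l : List E) (hf : HasCompactSupport f) :
    HasCompactSupport (iterLineDeriv l f) := by
  induction l generalizing f with
  | nil => exact hf
  | cons v _ ih => exact ih (hasCompactSupport_lineDeriv hf v)

lemma iterLineDeriv_append (l l' : List E) (f : E → ℝ) :
    iterLineDeriv (l ++ l') f = iterLineDeriv l' (iterLineDeriv l f) := by
  induction l generalizing f with
  | nil => rfl
  | cons _ _ ih => exact ih _

lemma iterLineDeriv_perm {l l' : List E} (h : l.Perm l') (hf : ContDiff ℝ l.length f) :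
    iterLineDeriv l f = iterLineDeriv l' f := by
  induction h generalizing f with
  | nil => rfl
  | cons v _ ih => exact ih (contDiff_lineDeriv (by simpa using hf) v)
  | swap v w l =>
    have hf2 : ContDiff ℝ 2 f := hf.of_le (by exact_mod_cast Nat.le_add_left 2 l.length)
    simp only [iterLineDeriv, lineDeriv_lineDeriv_comm hf2 _ w v]
  | trans h₁ _ ih₁ ih₂ => rw [ih₁ hf, ih₂ (h₁.length_eq ▸ hf)]

end IterLineDeriv

section MultiIndex

variable {m : ℕ} (α : Fin m → ℕ)

lemma length_multiIndexList : (multiIndexList α).length = ∑ i, α i := by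
  simp [multiIndexList, List.length_flatMap, List.sum_ofFn, ← List.ofFn_eq_map]

lemma multiIndexList_add_one_perm :
    (multiIndexList fun i => α i + 1).Perm
      (multiIndexList α ++ List.ofFn fun i => EuclideanSpace.single i (1 : ℝ)) := by
  simp only [multiIndexList, List.replicate_succ', List.ofFn_eq_map, List.map_eq_flatMap]
  exact (List.flatMap_append_perm _ _ _).symm

lemma iterLineDeriv_multiIndexList_add_one {φ : EuclideanSpace ℝ (Fin m) → ℝ}
    (hφ : ContDiff ℝ (∑ i, (α i + 1) : ℕ) φ) :
    iterLineDeriv (multiIndexList fun i => α i + 1) φ =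
      iterLineDeriv (List.ofFn fun i => EuclideanSpace.single i (1 : ℝ))
        (iterLineDeriv (multiIndexList α) φ) := by
  rw [← length_multiIndexList] at hφ
  rw [iterLineDeriv_perm (multiIndexList_add_one_perm α) hφ, iterLineDeriv_append]

end MultiIndex

section OrthantIntegral

lemma setIntegral_Iic_fin_succ {F : Type*} [NormedAddCommGroup F] [NormedSpace ℝ F] {n : ℕ}
    {f : (Fin (n + 1) → ℝ) → F} {a : Fin (n + 1) → ℝ} (hf : IntegrableOn f (Set.Iic a)) :
    ∫ t in Set.Iic a, f t =
      ∫ s in Set.Iic (a 0), ∫ t in Set.Iic (Fin.tail a), f (Fin.cons s t) := by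
  let e := (MeasurableEquiv.piFinSuccAbove (fun _ : Fin (n + 1) => ℝ) 0).symm
  have he : MeasurePreserving e := (volume_preserving_piFinSuccAbove (fun _ => ℝ) 0).symm
  have he_apply (p : ℝ × (Fin n → ℝ)) : e p = Fin.cons p.1 p.2 := by
    simp [e, MeasurableEquiv.piFinSuccAbove_symm_apply, Fin.insertNthEquiv]
  have hpre : e ⁻¹' Set.Iic a = Set.Iic (a 0) ×ˢ Set.Iic (Fin.tail a) := by
    ext p
    simp only [Set.mem_preimage, he_apply, Set.mem_Iic, Set.mem_prod, Pi.le_def,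
      Fin.forall_fin_succ, Fin.cons_zero, Fin.cons_succ, Fin.tail]
  have hint : IntegrableOn (fun p => f (e p)) (Set.Iic (a 0) ×ˢ Set.Iic (Fin.tail a)) := by
    rw [← hpre]
    exact (he.integrableOn_comp_preimage e.measurableEmbedding).2 hf
  rw [← he.setIntegral_preimage_emb e.measurableEmbedding, hpre, Measure.volume_eq_prod,
    setIntegral_prod _ hint]
  simp only [he_apply]

lemma isClosedEmbedding_add_sum_smul {ι E : Type*} [Fintype ι] [NormedAddCommGroup E]
    [NormedSpace ℝ E] {v : ι → E} (hv : LinearIndependent ℝ v) (x : E) :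
    IsClosedEmbedding fun t : ι → ℝ => x + ∑ i, t i • v i :=
  (Homeomorph.addLeft x).isClosedEmbedding.comp <|
    LinearMap.isClosedEmbedding_of_injective (f := Fintype.linearCombination ℝ v) <|
      LinearMap.ker_eq_bot.2 hv.fintypeLinearCombination_injective

lemma setIntegral_Iic_iterLineDeriv_ofFn {E : Type} [NormedAddCommGroup E] [NormedSpace ℝ E]
    {n : ℕ} {v : Fin n → E} (hv : LinearIndependent ℝ v) {g : E → ℝ} (hg : ContDiff ℝ n g)
    (hgc : HasCompactSupport g) (x : E) :
    ∫ t in Set.Iic (0 : Fin n → ℝ), iterLineDeriv (List.ofFn v) g (x + ∑ i, t i • v i) = g x := by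
  induction n generalizing g x with
  | zero =>
    have huniv : Set.Iic (0 : Fin 0 → ℝ) = Set.univ :=
      Set.eq_univ_of_forall fun _ => Set.mem_Iic.2 (Subsingleton.elim _ _).le
    rw [huniv]
    simp [iterLineDeriv, integral_unique, measureReal_def, volume_pi]
  | succ n ih =>
    let g₀ : E → ℝ := fun y => lineDeriv ℝ g y (v 0)
    have hg₀ : ContDiff ℝ n g₀ := contDiff_lineDeriv (mod_cast hg) (v 0)
    have hg₀c : HasCompactSupport g₀ := hasCompactSupport_lineDeriv hgc (v 0)
    have hint : Integrable fun t : Fin (n + 1) → ℝ =>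
        iterLineDeriv (List.ofFn v) g (x + ∑ i, t i • v i) := by
      have hemb := isClosedEmbedding_add_sum_smul hv x
      have hcont : Continuous (iterLineDeriv (List.ofFn v) g) :=
        continuous_iterLineDeriv _ (by simpa using hg)
      exact (hcont.comp hemb.continuous).integrable_of_hasCompactSupport
        ((hasCompactSupport_iterLineDeriv _ hgc).comp_isClosedEmbedding hemb)
    calc ∫ t in Set.Iic (0 : Fin (n + 1) → ℝ), iterLineDeriv (List.ofFn v) g (x + ∑ i, t i • v i)
        = ∫ s in Set.Iic (0 : ℝ), ∫ t in Set.Iic (0 : Fin n → ℝ),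
            iterLineDeriv (List.ofFn (Fin.tail v)) g₀
              (x + s • v 0 + ∑ i, t i • Fin.tail v i) := by
          rw [setIntegral_Iic_fin_succ hint.integrableOn]
          simp only [List.ofFn_succ, iterLineDeriv, Fin.sum_univ_succ, Fin.cons_zero,
            Fin.cons_succ, add_assoc]
          rfl
      _ = ∫ s in Set.Iic (0 : ℝ), g₀ (x + s • v 0) := by
          have hv' : LinearIndependent ℝ (Fin.tail v) := hv.comp Fin.succ (Fin.succ_injective n)
          simp only [ih hv' hg₀ hg₀c]
      _ = g x := setIntegral_Iic_lineDeriv (hg.of_le (by simp)) hgc (hv.ne_zero 0) x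

lemma setIntegral_setOf_le_euclideanSpace {ι F : Type*} [Fintype ι] [NormedAddCommGroup F]
    [NormedSpace ℝ F] (f : EuclideanSpace ℝ ι → F) (x : EuclideanSpace ℝ ι) :
    ∫ u in {u : EuclideanSpace ℝ ι | ∀ i, u i ≤ x i}, f u =
      ∫ t in Set.Iic (0 : ι → ℝ), f (x + WithLp.toLp 2 t) := by
  let e := (MeasurableEquiv.toLp 2 (ι → ℝ)).trans (MeasurableEquiv.addLeft x)
  have he : MeasurePreserving e :=
    (measurePreserving_add_left volume x).comp (PiLp.volume_preserving_toLp ι)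
  rw [← he.setIntegral_preimage_emb e.measurableEmbedding]
  congr 2
  ext t
  simp [e, Pi.le_def]

lemma setIntegral_iterLineDeriv_single {m : ℕ} {g : EuclideanSpace ℝ (Fin m) → ℝ}
    (hg : ContDiff ℝ m g) (hgc : HasCompactSupport g) (x : EuclideanSpace ℝ (Fin m)) :
    ∫ u in {u : EuclideanSpace ℝ (Fin m) | ∀ i, u i ≤ x i},
      iterLineDeriv (List.ofFn fun i => EuclideanSpace.single i (1 : ℝ)) g u = g x := by
  have hbasis : LinearIndependent ℝ fun i : Fin m => EuclideanSpace.single i (1 : ℝ) :=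
    EuclideanSpace.orthonormal_single.linearIndependent
  have hsum (t : Fin m → ℝ) :
      WithLp.toLp 2 t = ∑ i, t i • EuclideanSpace.single i (1 : ℝ) := by
    ext j
    simp [Pi.single_apply]
  simp only [setIntegral_setOf_le_euclideanSpace, hsum]
  exact setIntegral_Iic_iterLineDeriv_ofFn hbasis hg hgc x

end OrthantIntegral

section SurvivalFunction

lemma integral_setIntegral_prodMk {X Y F : Type*} [MeasurableSpace X] [MeasurableSpace Y]
    [NormedAddCommGroup F] [NormedSpace ℝ F] [CompleteSpace F] {μ : Measure X} [IsFiniteMeasure μ]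
    {ν : Measure Y} [SFinite ν] {S : Set (X × Y)} (hS : MeasurableSet S) {G : Y → F}
    (hG : Integrable G ν) :
    ∫ x, ∫ y in {y | (x, y) ∈ S}, G y ∂ν ∂μ = ∫ y, μ.real {x | (x, y) ∈ S} • G y ∂ν := by
  have hint : Integrable (S.indicator fun p => G p.2) (μ.prod ν) := (hG.comp_snd μ).indicator hS
  calc ∫ x, ∫ y in {y | (x, y) ∈ S}, G y ∂ν ∂μ
      = ∫ x, ∫ y, S.indicator (fun p => G p.2) (x, y) ∂ν ∂μ := by
        congr with x
        exact (integral_indicator (measurable_prodMk_left hS)).symm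
    _ = ∫ y, ∫ x, S.indicator (fun p => G p.2) (x, y) ∂μ ∂ν :=
        integral_integral_swap (f := fun x y => S.indicator (fun p => G p.2) (x, y)) hint
    _ = ∫ y, μ.real {x | (x, y) ∈ S} • G y ∂ν := by
        congr with y
        exact integral_indicator_const (G y) (measurable_prodMk_right hS)

variable {ι : Type*}

/-- The multivariate survival function of a measure `μ` on `ℝ^ι`: the mass which `μ` gives to the
closed upper orthant `{x | u ≤ x}`, for the coordinatewise order (which is not an instance on
`EuclideanSpace`). -/
noncomputable def survivalFunction (μ : Measure (EuclideanSpace ℝ ι))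
    (u : EuclideanSpace ℝ ι) : ℝ :=
  μ.real {x | ∀ i, u i ≤ x i}

variable (μ : Measure (EuclideanSpace ℝ ι))

lemma eLpNorm_top_survivalFunction_le (ν : Measure (EuclideanSpace ℝ ι)) :
    eLpNorm (survivalFunction μ) ⊤ ν ≤ μ Set.univ := by
  rw [eLpNorm_exponent_top]
  refine essSup_le_of_ae_le _ (ae_of_all _ fun u => ?_)
  change ‖μ.real _‖ₑ ≤ _
  rw [Real.enorm_of_nonneg measureReal_nonneg]
  exact ENNReal.ofReal_toReal_le.trans (measure_mono (Set.subset_univ _))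

variable [Finite ι]

lemma measurableSet_setOf_le_euclideanSpace :
    MeasurableSet {p : EuclideanSpace ℝ ι × EuclideanSpace ℝ ι | ∀ i, p.2 i ≤ p.1 i} := by
  rw [Set.ofPred_forall]
  exact (isClosed_iInter fun i => isClosed_le (by fun_prop) (by fun_prop)).measurableSet

lemma measurable_survivalFunction [SFinite μ] : Measurable (survivalFunction μ) :=
  (measurable_measure_prodMk_right measurableSet_setOf_le_euclideanSpace).ennreal_toReal

lemma integral_setIntegral_setOf_le {ι F : Type*} [Fintype ι]
    (μ : Measure (EuclideanSpace ℝ ι)) [IsFiniteMeasure μ] [NormedAddCommGroup F] [NormedSpace ℝ F]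
    [CompleteSpace F] {G : EuclideanSpace ℝ ι → F} (hG : Integrable G) :
    ∫ x, (∫ u in {u : EuclideanSpace ℝ ι | ∀ i, u i ≤ x i}, G u) ∂μ =
      ∫ u, survivalFunction μ u • G u :=
  integral_setIntegral_prodMk measurableSet_setOf_le_euclideanSpace hG

end SurvivalFunction

lemma integral_iterLineDeriv_single_mul_survivalFunction {m : ℕ}
    (μ : Measure (EuclideanSpace ℝ (Fin m))) [IsFiniteMeasure μ]
    {g : EuclideanSpace ℝ (Fin m) → ℝ} (hg : ContDiff ℝ m g) (hgc : HasCompactSupport g) :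
    ∫ u, iterLineDeriv (List.ofFn fun i => EuclideanSpace.single i (1 : ℝ)) g u *
      survivalFunction μ u = ∫ x, g x ∂μ := by
  set G := iterLineDeriv (List.ofFn fun i : Fin m => EuclideanSpace.single i (1 : ℝ)) g with hG_def
  have hG : Integrable G :=
    (continuous_iterLineDeriv _ (by simpa using hg)).integrable_of_hasCompactSupport
      (hasCompactSupport_iterLineDeriv _ hgc)
  calc ∫ u, G u * survivalFunction μ u
      = ∫ x, (∫ u in {u : EuclideanSpace ℝ (Fin m) | ∀ i, u i ≤ x i}, G u) ∂μ := by
        simp only [integral_setIntegral_setOf_le μ hG, smul_eq_mul, mul_comm]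
    _ = ∫ x, g x ∂μ := by simp only [hG_def, setIntegral_iterLineDeriv_single hg hgc]

theorem exists_Linf_density_for_distribution_general {m : ℕ}
    (μ : Measure (EuclideanSpace ℝ (Fin m))) [IsFiniteMeasure μ] :
    ∃ ρ : EuclideanSpace ℝ (Fin m) → ℝ, Measurable ρ ∧ eLpNorm ρ ⊤ volume ≤ μ Set.univ ∧
      ∀ (α : Fin m → ℕ) (φ : EuclideanSpace ℝ (Fin m) → ℝ),
        ContDiff ℝ (∑ i, (α i + 1) : ℕ) φ → HasCompactSupport φ →
        ∫ x, iterLineDeriv (multiIndexList α) φ x ∂μ =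
          ∫ u, iterLineDeriv (multiIndexList (fun i => α i + 1)) φ u * ρ u := by
  refine ⟨survivalFunction μ, measurable_survivalFunction μ,
    eLpNorm_top_survivalFunction_le μ volume, fun α φ hφ hφc => ?_⟩
  have hψ : ContDiff ℝ m (iterLineDeriv (multiIndexList α) φ) := by
    refine contDiff_iterLineDeriv _ (hφ.of_le (le_of_eq ?_))
    simp [length_multiIndexList, Finset.sum_add_distrib, add_comm]
  rw [iterLineDeriv_multiIndexList_add_one α hφ]
  exact (integral_iterLineDeriv_single_mul_survivalFunction μ hψ
    (hasCompactSupport_iterLineDeriv _ hφc)).symm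

/-- Let `𝔻 ⊆ ℝ^m` be the closed unit ball, `μ` a finite Borel measure on `𝔻` and `α` a
multi-index.  Then there is an essentially bounded measurable `ρ : ℝ^m → ℝ` with
`‖ρ‖_{L^∞} ≤ μ(𝔻)` such that `∫_𝔻 ∂^α φ dμ = ∫_{ℝ^m} ∂^{α+e} φ · ρ du` for every smooth
compactly supported `φ`, where `e = (1,…,1)`. -/
theorem exists_Linf_density_for_distribution
    {m : ℕ} (μ : Measure (EuclideanSpace ℝ (Fin m))) [IsFiniteMeasure μ]
    (α : Fin m → ℕ) :
    ∃ ρ : EuclideanSpace ℝ (Fin m) → ℝ, Measurable ρ ∧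
      eLpNorm ρ ⊤ volume ≤ μ (Metric.closedBall 0 1) ∧
      ∀ φ : EuclideanSpace ℝ (Fin m) → ℝ, ContDiff ℝ (⊤ : ℕ∞) φ → HasCompactSupport φ →
        ∫ x in Metric.closedBall 0 1, iterLineDeriv (multiIndexList α) φ x ∂μ =
          ∫ u, iterLineDeriv (multiIndexList (fun i => α i + 1)) φ u * ρ u := by
  obtain ⟨ρ, hρ, hρ_le, hρ_eq⟩ :=
    exists_Linf_density_for_distribution_general (μ.restrict (Metric.closedBall 0 1))
  exact ⟨ρ, hρ, by simpa using hρ_le, fun φ hφ => hρ_eq α φ (hφ.of_le (mod_cast le_top))⟩
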